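/- arXiv:1705.02191 — 2 statements merged into one kernel-verified Lean document; each statement's English description precedes it below -/
import Mathlib

section
/- Let n = 1, v̄ > 0, V = [−v̄, v̄], and let M : V → ℝ be measurable with M(v) ≥ δ for all v ∈ V, for some δ > 0. Then for every p ∈ ℝ with p ≠ 0 one has ∫_V M(v)/(μ(p) − v p) dv = +∞, where μ(p) = |p| v̄. In particular the singular set Sing(M) is empty, and for every p ∈ ℝ there exists a unique H(p) > μ(p) − 1 with ∫_V M(v)/(1 + H(p) − v p) dv = 1. -/
open MeasureTheory

/-!
For `c > μ(p)` put `F(c) = ∫_V M(v) / (c - v p) dv`. By dominated convergence `F` is continuous and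
tends to `0` as `c → ∞`; it is strictly decreasing, and by monotone convergence it rises to
`∫_V M(v) / (μ(p) - v p) dv` as `c ↓ μ(p)`. So `F` takes the value `1` exactly once as soon as that
limit exceeds `1`; this holds for any measure and any function bounded above in place of `v p`.
In dimension one the limit is infinite: for `p ≠ 0` the denominator vanishes to first order at an
endpoint of `V`, where `M ≥ δ`, and `1 / |v - x|` is not integrable near `x`; for `p = 0` the
denominator is identically `0`.
-/

open Filter Set Topology
open scoped ENNReal

theorem integral_lt_integral_of_ae_lt {α : Type*} [MeasurableSpace α] {μ : Measure α} [NeZero μ]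
    {f g : α → ℝ} (hf : Integrable f μ) (hg : Integrable g μ) (hfg : ∀ᵐ v ∂μ, f v < g v) :
    ∫ v, f v ∂μ < ∫ v, g v ∂μ := by
  have hle : f ≤ᵐ[μ] g := hfg.mono fun _ hv ↦ hv.le
  refine (integral_mono_ae hf hg hle).lt_of_ne fun heq ↦ ?_
  have hae : f =ᵐ[μ] g := (integral_eq_iff_of_ae_le hf hg hle).1 heq
  obtain ⟨v, hlt, hveq⟩ := (hfg.and hae).exists
  exact hlt.ne hveq

theorem norm_div_sub_le {a b c x y : ℝ} (hy : y ≤ a) (hb : a < b) (hc : b ≤ c) :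
    ‖x / (c - y)‖ ≤ ‖x‖ / (b - a) := by
  rw [norm_div, Real.norm_of_nonneg (show 0 ≤ c - y by linarith)]
  exact div_le_div_of_nonneg_left (norm_nonneg x) (sub_pos.2 hb) (by linarith)

section DispersionIntegral

variable {α : Type*} [MeasurableSpace α] {μ : Measure α} {f g : α → ℝ} {a c r : ℝ}

theorem integrable_div_sub (hf : Integrable f μ) (hg : AEMeasurable g μ)
    (hga : ∀ᵐ v ∂μ, g v ≤ a) (hc : a < c) : Integrable (fun v ↦ f v / (c - g v)) μ :=
  (hf.norm.div_const (c - a)).mono' (hf.aemeasurable.div (hg.const_sub c)).aestronglyMeasurable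
    (hga.mono fun _ hv ↦ norm_div_sub_le hv hc le_rfl)

theorem strictAntiOn_integral_div_sub [NeZero μ] (hf : Integrable f μ) (hg : AEMeasurable g μ)
    (hga : ∀ᵐ v ∂μ, g v ≤ a) (hf0 : ∀ᵐ v ∂μ, 0 < f v) :
    StrictAntiOn (fun c ↦ ∫ v, f v / (c - g v) ∂μ) (Ioi a) := by
  intro c hc d hd hcd
  refine integral_lt_integral_of_ae_lt (integrable_div_sub hf hg hga hd)
    (integrable_div_sub hf hg hga hc) ?_
  filter_upwards [hga, hf0] with v hgv hfv
  exact div_lt_div_of_pos_left hfv (sub_pos.2 (hgv.trans_lt hc)) (sub_lt_sub_right hcd _)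

theorem continuousOn_integral_div_sub (hf : Integrable f μ) (hg : AEMeasurable g μ)
    (hga : ∀ᵐ v ∂μ, g v ≤ a) :
    ContinuousOn (fun c ↦ ∫ v, f v / (c - g v) ∂μ) (Ioi a) := by
  intro c hc
  obtain ⟨b, hab, hbc⟩ := exists_between (mem_Ioi.1 hc)
  refine (continuousAt_of_dominated (bound := fun v ↦ ‖f v‖ / (b - a)) ?_ ?_
    (hf.norm.div_const _) ?_).continuousWithinAt
  · filter_upwards [lt_mem_nhds hc] with d hd
    exact (integrable_div_sub hf hg hga hd).aestronglyMeasurable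
  · filter_upwards [lt_mem_nhds hbc] with d hd
    exact hga.mono fun v hv ↦ norm_div_sub_le hv hab hd.le
  · filter_upwards [hga] with v hv
    exact continuousAt_const.div (by fun_prop) (sub_pos.2 (hv.trans_lt hc)).ne'

theorem tendsto_integral_div_sub_atTop (hf : Integrable f μ) (hg : AEMeasurable g μ)
    (hga : ∀ᵐ v ∂μ, g v ≤ a) :
    Tendsto (fun c ↦ ∫ v, f v / (c - g v) ∂μ) atTop (𝓝 0) := by
  have hab : a < a + 1 := lt_add_one a
  rw [← integral_zero α ℝ (μ := μ)]
  refine tendsto_integral_filter_of_dominated_convergence (fun v ↦ ‖f v‖ / (a + 1 - a)) ?_ ?_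
    (hf.norm.div_const _) (ae_of_all _ fun v ↦ ?_)
  · filter_upwards [eventually_gt_atTop a] with c hc
    exact (integrable_div_sub hf hg hga hc).aestronglyMeasurable
  · filter_upwards [eventually_ge_atTop (a + 1)] with c hc
    exact hga.mono fun v hv ↦ norm_div_sub_le hv hab hc
  · exact (tendsto_atTop_add_const_right atTop (-g v) tendsto_id).const_div_atTop (f v)

theorem ofReal_integral_div_sub (hf : Integrable f μ) (hg : AEMeasurable g μ)
    (hga : ∀ᵐ v ∂μ, g v ≤ a) (hf0 : ∀ᵐ v ∂μ, 0 ≤ f v) (hc : a < c) :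
    ENNReal.ofReal (∫ v, f v / (c - g v) ∂μ) =
      ∫⁻ v, ENNReal.ofReal (f v) / ENNReal.ofReal (c - g v) ∂μ := by
  have hpos : ∀ᵐ v ∂μ, 0 < c - g v := hga.mono fun v hv ↦ sub_pos.2 (hv.trans_lt hc)
  rw [ofReal_integral_eq_lintegral_ofReal (integrable_div_sub hf hg hga hc)
    ((hf0.and hpos).mono fun v hv ↦ div_nonneg hv.1 hv.2.le)]
  exact lintegral_congr_ae (hpos.mono fun v hv ↦ ENNReal.ofReal_div_of_pos hv)

-- The quotient is taken in `ℝ≥0∞`, so that it is `∞`, and not `0`, where `g v = a` and `0 < f v`.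
theorem exists_lt_integral_div_sub (hf : Integrable f μ) (hg : AEMeasurable g μ)
    (hga : ∀ᵐ v ∂μ, g v ≤ a) (hf0 : ∀ᵐ v ∂μ, 0 ≤ f v)
    (hr : ENNReal.ofReal r < ∫⁻ v, ENNReal.ofReal (f v) / ENNReal.ofReal (a - g v) ∂μ) :
    ∃ c, a < c ∧ r < ∫ v, f v / (c - g v) ∂μ := by
  obtain ⟨u, hu_anti, hu_gt, hu_lim⟩ := exists_seq_strictAnti_tendsto a
  have hlim : Tendsto (fun n ↦ ∫⁻ v, ENNReal.ofReal (f v) / ENNReal.ofReal (u n - g v) ∂μ) atTop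
      (𝓝 (∫⁻ v, ENNReal.ofReal (f v) / ENNReal.ofReal (a - g v) ∂μ)) := by
    refine lintegral_tendsto_of_tendsto_of_monotone
      (fun n ↦ hf.aemeasurable.ennreal_ofReal.div (hg.const_sub _).ennreal_ofReal)
      (ae_of_all _ fun v m n hmn ↦ ?_) (ae_of_all _ fun v ↦ ?_)
    · exact ENNReal.div_le_div_left
        (ENNReal.ofReal_le_ofReal (sub_le_sub_right (hu_anti.antitone hmn) _)) _
    · exact ENNReal.Tendsto.const_div (ENNReal.tendsto_ofReal (hu_lim.sub_const _))
        (Or.inr ENNReal.ofReal_ne_top)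
  obtain ⟨n, hn⟩ := (hlim.eventually (lt_mem_nhds hr)).exists
  rw [← ofReal_integral_div_sub hf hg hga hf0 (hu_gt n)] at hn
  exact ⟨u n, hu_gt n, (ENNReal.ofReal_lt_ofReal_iff'.1 hn).1⟩

theorem existsUnique_integral_div_sub_eq (hf : Integrable f μ) (hg : AEMeasurable g μ)
    (hga : ∀ᵐ v ∂μ, g v ≤ a) (hf0 : ∀ᵐ v ∂μ, 0 < f v) (hr0 : 0 < r)
    (hr : ENNReal.ofReal r < ∫⁻ v, ENNReal.ofReal (f v) / ENNReal.ofReal (a - g v) ∂μ) :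
    ∃! c, a < c ∧ ∫ v, f v / (c - g v) ∂μ = r := by
  have : NeZero μ := ⟨by rintro rfl; simp at hr⟩
  obtain ⟨b, hab, hb⟩ :=
    exists_lt_integral_div_sub hf hg hga (hf0.mono fun _ hv ↦ hv.le) hr
  obtain ⟨d, hd, hbd⟩ := (((tendsto_integral_div_sub_atTop hf hg hga).eventually
    (gt_mem_nhds hr0)).and (eventually_ge_atTop b)).exists
  have hcont : ContinuousOn (fun c ↦ ∫ v, f v / (c - g v) ∂μ) (Icc b d) :=
    (continuousOn_integral_div_sub hf hg hga).mono fun c hc ↦ hab.trans_le hc.1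
  obtain ⟨c, hc, hcr⟩ := intermediate_value_Icc' hbd hcont ⟨hd.le, hb.le⟩
  have hac : a < c := hab.trans_le hc.1
  exact ⟨c, ⟨hac, hcr⟩, fun e he ↦ (strictAntiOn_integral_div_sub hf hg hga hf0).injOn he.1 hac
    (he.2.trans hcr.symm)⟩

end DispersionIntegral

section Interval

variable {a b x w p v δ : ℝ} {f M : ℝ → ℝ}

theorem lintegral_enorm_inv_sub_eq_top (hab : a < b) (hx : x ∈ Icc a b) :
    ∫⁻ v in Icc a b, ‖(v - x)⁻¹‖ₑ = ∞ := by
  by_contra hfin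
  have hint : IntegrableOn (fun v ↦ (v - x)⁻¹) (Icc a b) :=
    ⟨Measurable.aestronglyMeasurable (by fun_prop), lt_top_iff_ne_top.2 hfin⟩
  rw [← intervalIntegrable_iff_integrableOn_Icc_of_le hab.le, intervalIntegrable_sub_inv_iff,
    uIcc_of_le hab.le] at hint
  exact hint.elim hab.ne (· hx)

theorem lintegral_ofReal_div_abs_sub_eq_top (hab : a < b) (hx : x ∈ Icc a b) (hδ : 0 < δ)
    (hf : ∀ v ∈ Icc a b, δ ≤ f v) :
    ∫⁻ v in Icc a b, ENNReal.ofReal (f v / |v - x|) = ∞ := by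
  refine eq_top_mono (setLIntegral_mono' measurableSet_Icc fun v hv ↦ ?_)
    (a := ∫⁻ v in Icc a b, ENNReal.ofReal δ * ‖(v - x)⁻¹‖ₑ) ?_
  · rw [← ofReal_norm, norm_inv, Real.norm_eq_abs, ← ENNReal.ofReal_mul hδ.le, ← div_eq_mul_inv]
    exact ENNReal.ofReal_le_ofReal (div_le_div_of_nonneg_right (hf v hv) (abs_nonneg _))
  · rw [lintegral_const_mul' _ _ ENNReal.ofReal_ne_top, lintegral_enorm_inv_sub_eq_top hab hx,
      ENNReal.mul_top (ENNReal.ofReal_pos.2 hδ).ne']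

theorem mul_le_abs_mul_of_mem_Icc (hv : v ∈ Icc (-w) w) : v * p ≤ |p| * w :=
  calc v * p ≤ |v| * |p| := (le_abs_self _).trans (abs_mul v p).le
    _ ≤ w * |p| := mul_le_mul_of_nonneg_right (abs_le.2 hv) (abs_nonneg p)
    _ = |p| * w := mul_comm _ _

theorem abs_mul_div_self_mem_Icc (hw : 0 ≤ w) (hp : p ≠ 0) : |p| * w / p ∈ Icc (-w) w := by
  refine abs_le.1 (le_of_eq ?_)
  rw [abs_div, abs_mul, abs_abs, abs_of_nonneg hw, mul_div_cancel_left₀ w (abs_ne_zero.2 hp)]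

theorem abs_mul_sub_mul_eq (hp : p ≠ 0) (hv : v ∈ Icc (-w) w) :
    |p| * w - v * p = |p| * |v - |p| * w / p| := by
  rw [← abs_mul, mul_sub, mul_div_cancel₀ _ hp, mul_comm p v,
    abs_of_nonpos (sub_nonpos.2 (mul_le_abs_mul_of_mem_Icc hv)), neg_sub]

theorem lintegral_ofReal_div_abs_mul_sub_mul_eq_top (hw : 0 < w) (hδ : 0 < δ)
    (hM : ∀ v ∈ Icc (-w) w, δ ≤ M v) (hp : p ≠ 0) :
    ∫⁻ v in Icc (-w) w, ENNReal.ofReal (M v / (|p| * w - v * p)) = ∞ := by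
  have hp' : 0 < |p| := abs_pos.2 hp
  rw [← lintegral_ofReal_div_abs_sub_eq_top (f := fun v ↦ M v / |p|) (neg_lt_self hw)
    (abs_mul_div_self_mem_Icc hw.le hp) (div_pos hδ hp')
    fun v hv ↦ div_le_div_of_nonneg_right (hM v hv) hp'.le]
  refine setLIntegral_congr_fun measurableSet_Icc fun v hv ↦ ?_
  simp only [abs_mul_sub_mul_eq hp hv, div_div]

theorem lintegral_ofReal_div_ofReal_abs_mul_sub_mul_eq_top (hw : 0 < w) (hδ : 0 < δ)
    (hM : ∀ v ∈ Icc (-w) w, δ ≤ M v) (p : ℝ) :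
    ∫⁻ v in Icc (-w) w, ENNReal.ofReal (M v) / ENNReal.ofReal (|p| * w - v * p) = ∞ := by
  rcases eq_or_ne p 0 with rfl | hp
  · have htop : ∀ v ∈ Icc (-w) w,
        ENNReal.ofReal (M v) / ENNReal.ofReal (|0| * w - v * 0) = ∞ := fun v hv ↦ by
      simp [ENNReal.div_zero, hδ.trans_le (hM v hv)]
    rw [setLIntegral_congr_fun measurableSet_Icc htop, setLIntegral_const, ENNReal.top_mul]
    simp [hw]
  · refine eq_top_mono (setLIntegral_mono' measurableSet_Icc fun v hv ↦ ?_)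
      (lintegral_ofReal_div_abs_mul_sub_mul_eq_top hw hδ hM hp)
    exact ENNReal.ofReal_div_le (sub_nonneg.2 (mul_le_abs_mul_of_mem_Icc hv))

end Interval

/-- in dimension one, if `M ≥ δ > 0` on `V = [−v̄, v̄]`, then for every
`p ≠ 0` the integral `∫_V M(v)/(μ(p) − v p) dv` is infinite; hence `Sing(M) = ∅`
and for every `p` there is a unique `H(p) > μ(p) − 1` solving the dispersion
relation `∫_V M(v)/(1 + H(p) − v p) dv = 1`. -/
theorem stmt3
    (vbar : ℝ) (hvbar : 0 < vbar)
    (M : ℝ → ℝ) (hMmeas : Measurable M)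
    (hMint : IntegrableOn M (Set.Icc (-vbar) vbar) volume)
    (δ : ℝ) (hδ : 0 < δ) (hMδ : ∀ v ∈ Set.Icc (-vbar) vbar, δ ≤ M v) :
    (∀ p : ℝ, p ≠ 0 →
      ∫⁻ v in Set.Icc (-vbar) vbar,
        ENNReal.ofReal (M v / (|p| * vbar - v * p)) = ⊤) ∧
    ({p : ℝ | p ≠ 0 ∧
        ∫⁻ v in Set.Icc (-vbar) vbar,
          ENNReal.ofReal (M v / (|p| * vbar - v * p)) ≤ 1} = ∅) ∧
    (∀ p : ℝ, ∃! H : ℝ, |p| * vbar - 1 < H ∧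
        ∫ v in Set.Icc (-vbar) vbar, M v / (1 + H - v * p) = 1) := by
  have htop (p : ℝ) (hp : p ≠ 0) :=
    lintegral_ofReal_div_abs_mul_sub_mul_eq_top hvbar hδ hMδ hp
  refine ⟨htop, ?_, fun p ↦ ?_⟩
  · refine eq_empty_of_forall_notMem fun p ⟨hp, hle⟩ ↦ ?_
    exact (htop p hp ▸ hle).not_gt ENNReal.one_lt_top
  · have hexists : ∃! c, |p| * vbar < c ∧ ∫ v in Icc (-vbar) vbar, M v / (c - v * p) = 1 := by
      refine existsUnique_integral_div_sub_eq hMint (by fun_prop)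
        (ae_restrict_of_forall_mem measurableSet_Icc fun v ↦ mul_le_abs_mul_of_mem_Icc)
        (ae_restrict_of_forall_mem measurableSet_Icc fun v hv ↦ hδ.trans_le (hMδ v hv))
        one_pos ?_
      rw [lintegral_ofReal_div_ofReal_abs_mul_sub_mul_eq_top hvbar hδ hMδ p]
      exact ENNReal.ofReal_lt_top
    rw [← (Equiv.addLeft (1 : ℝ)).existsUnique_congr_right] at hexists
    simpa only [Equiv.coe_addLeft, sub_lt_iff_lt_add'] using hexists
end

section
/- Let V = [−1,1] and M(v) = (3/2)(1 − |v|)². Then M is a probability density on V, and for every p ∈ ℝ with p ≠ 0 one has ∫_{−1}^{1} M(v)/(|p| − v p) dv ≤ 1 if and only if |p| ≥ 3(2 ln 2 − 1). Equivalently, the singular set of M is Sing(M) = {p ∈ ℝ : |p| ≥ 3(2 ln 2 − 1)}. -/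
open MeasureTheory

/-!
Pairing the velocities `v` and `-v`, an even density `M` satisfies
`M v / (|p| - v p) + M v / (|p| + v p) = |p|⁻¹ * (2 M v / (1 - v²))`, so the integral over
`[-1, 1]` is `|p|⁻¹` times a constant, and it is at most `1` exactly when `|p|` dominates that
constant. For `M v = (3 / 2) (1 - |v|)²` the zero of `M` at `v = 1` cancels the singularity and the
paired integrand is `6 / (1 + v) - 3`, whose integral over `(0, 1)` is `3 (2 log 2 - 1)`.
-/

open Set
open scoped ENNReal

theorem setLIntegral_Icc_neg_self_eq_add {μ : Measure ℝ} [μ.IsNegInvariant] [NullSingletonClass μ]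
    {a : ℝ} (ha : 0 ≤ a) (f : ℝ → ℝ≥0∞) :
    ∫⁻ x in Icc (-a) a, f x ∂μ = ∫⁻ x in Ioo 0 a, f x ∂μ + ∫⁻ x in Ioo 0 a, f (-x) ∂μ := by
  have hneg : ∫⁻ x in Ioo 0 a, f (-x) ∂μ = ∫⁻ x in Ioo (-a) 0, f x ∂μ := by
    rw [← (Measure.measurePreserving_neg μ).setLIntegral_comp_preimage_emb
      (MeasurableEquiv.neg ℝ).measurableEmbedding]
    simp
  rw [hneg, ← Ico_union_Icc_eq_Icc (neg_nonpos.2 ha) ha,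
    lintegral_union measurableSet_Icc ((Iio_disjoint_Ici le_rfl).mono Ico_subset_Iio_self
      Icc_subset_Ici_self), setLIntegral_congr Ioo_ae_eq_Icc.symm,
    setLIntegral_congr Ioo_ae_eq_Ico.symm, add_comm]

theorem setIntegral_Icc_comp_abs (a : ℝ) (f : ℝ → ℝ) :
    ∫ x in Icc (-a) a, f |x| = 2 * ∫ x in Ioc 0 a, f x := by
  have hind (x : ℝ) : (Icc (-a) a).indicator (fun y => f |y|) x = (Iic a).indicator f |x| := by
    simp only [indicator_apply, mem_Icc, mem_Iic, abs_le]
  rw [← integral_indicator measurableSet_Icc, integral_congr_ae (.of_forall hind),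
    integral_comp_abs, setIntegral_indicator measurableSet_Iic, Ioi_inter_Iic]

/-- The integral `∫_V M(v) / (μ(p) - v p) dv` for `V = [-1, 1]`, where `μ(p) = |p|`: the left-hand
side of the dispersion relation at the edge of its domain. It takes values in `[0, ∞]`, so a
divergent integral is `∞`; the zero denominator at `v = ±1` only affects a null set if `p ≠ 0`. -/
noncomputable def dispersionIntegral (M : ℝ → ℝ) (p : ℝ) : ℝ≥0∞ :=
  ∫⁻ v in Icc (-1 : ℝ) 1, ENNReal.ofReal (M v / (|p| - v * p))

/-- The singular set `Sing(M)`. The condition `p ≠ 0` excludes the point where every denominator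
vanishes and `dispersionIntegral M p` has the junk value `0`. -/
def singularSet (M : ℝ → ℝ) : Set ℝ :=
  {p | p ≠ 0 ∧ dispersionIntegral M p ≤ 1}

/-- The integral `∫_0^1 2 M(v) / (1 - v²) dv`, the value of `|p|` at which the dispersion integral
of an even `M` equals `1`. -/
noncomputable def singularThreshold (M : ℝ → ℝ) : ℝ≥0∞ :=
  ∫⁻ v in Ioo (0 : ℝ) 1, ENNReal.ofReal (2 * M v / (1 - v ^ 2))

theorem mul_lt_abs_of_abs_lt_one {p v : ℝ} (hp : p ≠ 0) (hv : |v| < 1) : v * p < |p| :=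
  calc v * p ≤ |v| * |p| := (le_abs_self _).trans_eq (abs_mul v p)
    _ < |p| := mul_lt_of_lt_one_left (abs_pos.2 hp) hv

theorem div_abs_sub_mul_add_div_abs_sub_neg_mul {p v : ℝ} (hp : p ≠ 0) (hv : |v| < 1) (m : ℝ) :
    m / (|p| - v * p) + m / (|p| - -v * p) = |p|⁻¹ * (2 * m / (1 - v ^ 2)) := by
  have hsub : |p| - v * p ≠ 0 := (sub_pos.2 (mul_lt_abs_of_abs_lt_one hp hv)).ne'
  have hadd : |p| - -v * p ≠ 0 :=
    (sub_pos.2 (mul_lt_abs_of_abs_lt_one hp ((abs_neg v).trans_lt hv))).ne'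
  have hsq : 1 - v ^ 2 ≠ 0 := (sub_pos.2 ((sq_lt_one_iff_abs_lt_one v).2 hv)).ne'
  have habs : |p| ≠ 0 := abs_ne_zero.2 hp
  have hprod : (|p| - v * p) * (|p| - -v * p) = |p| ^ 2 * (1 - v ^ 2) := by
    linear_combination (v ^ 2) * sq_abs p
  rw [div_add_div _ _ hsub hadd, hprod]
  field_simp
  ring

section EvenDensity

variable {M : ℝ → ℝ} {p : ℝ}

theorem dispersionIntegral_of_even (hM : Measurable M) (heven : M.Even)
    (hnonneg : ∀ v ∈ Ioo (0 : ℝ) 1, 0 ≤ M v) (hp : p ≠ 0) :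
    dispersionIntegral M p = ENNReal.ofReal |p|⁻¹ * singularThreshold M := by
  have hpair : ∀ v ∈ Ioo (0 : ℝ) 1,
      ENNReal.ofReal (M v / (|p| - v * p)) + ENNReal.ofReal (M (-v) / (|p| - -v * p))
        = ENNReal.ofReal |p|⁻¹ * ENNReal.ofReal (2 * M v / (1 - v ^ 2)) := by
    intro v hv
    have habs : |v| < 1 := abs_lt.2 ⟨by linarith [hv.1], hv.2⟩
    have hsub : 0 ≤ |p| - v * p := (sub_pos.2 (mul_lt_abs_of_abs_lt_one hp habs)).le
    have hadd : 0 ≤ |p| - -v * p :=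
      (sub_pos.2 (mul_lt_abs_of_abs_lt_one hp ((abs_neg v).trans_lt habs))).le
    rw [heven v, ← ENNReal.ofReal_add (div_nonneg (hnonneg v hv) hsub)
      (div_nonneg (hnonneg v hv) hadd), div_abs_sub_mul_add_div_abs_sub_neg_mul hp habs,
      ENNReal.ofReal_mul (inv_nonneg.2 (abs_nonneg p))]
  rw [dispersionIntegral, setLIntegral_Icc_neg_self_eq_add zero_le_one,
    ← lintegral_add_left (by fun_prop), setLIntegral_congr_fun measurableSet_Ioo hpair,
    lintegral_const_mul _ (by fun_prop), singularThreshold]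

theorem dispersionIntegral_le_one_iff_of_even (hM : Measurable M) (heven : M.Even)
    (hnonneg : ∀ v ∈ Ioo (0 : ℝ) 1, 0 ≤ M v) (hp : p ≠ 0) :
    dispersionIntegral M p ≤ 1 ↔ singularThreshold M ≤ ENNReal.ofReal |p| := by
  have hpos : 0 < |p| := abs_pos.2 hp
  rw [dispersionIntegral_of_even hM heven hnonneg hp, ENNReal.ofReal_inv_of_pos hpos,
    ENNReal.inv_mul_le_iff (ENNReal.ofReal_pos.2 hpos).ne' ENNReal.ofReal_ne_top, mul_one]

theorem singularSet_eq_of_even (hM : Measurable M) (heven : M.Even)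
    (hnonneg : ∀ v ∈ Ioo (0 : ℝ) 1, 0 ≤ M v) (hpos : 0 < singularThreshold M) :
    singularSet M = {p | singularThreshold M ≤ ENNReal.ofReal |p|} := by
  ext p
  rcases eq_or_ne p 0 with rfl | hp
  · simp [singularSet, hpos.ne']
  · simp [singularSet, hp, dispersionIntegral_le_one_iff_of_even hM heven hnonneg hp]

end EvenDensity

/-- The velocity density `M(v) = (3 / 2) (1 - |v|)²` whose singular set is computed; only its values
on `V = [-1, 1]` matter. -/
noncomputable def tentSqDensity (v : ℝ) : ℝ :=
  (3 / 2) * (1 - |v|) ^ 2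

theorem tentSqDensity_nonneg (v : ℝ) : 0 ≤ tentSqDensity v := by
  unfold tentSqDensity
  positivity

theorem even_tentSqDensity : tentSqDensity.Even := fun v => by
  rw [tentSqDensity, tentSqDensity, abs_neg]

@[fun_prop]
theorem measurable_tentSqDensity : Measurable tentSqDensity := by
  unfold tentSqDensity
  fun_prop

theorem integral_tentSqDensity : ∫ v in Icc (-1 : ℝ) 1, tentSqDensity v = 1 := by
  unfold tentSqDensity
  rw [setIntegral_Icc_comp_abs 1 fun v => (3 / 2) * (1 - v) ^ 2,
    ← intervalIntegral.integral_of_le zero_le_one, intervalIntegral.integral_const_mul,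
    intervalIntegral.integral_comp_sub_left (fun v => v ^ 2), integral_pow]
  norm_num

theorem two_mul_tentSqDensity_div_one_sub_sq {v : ℝ} (hv : v ∈ Ioo (0 : ℝ) 1) :
    2 * tentSqDensity v / (1 - v ^ 2) = 6 * (1 + v)⁻¹ - 3 := by
  have hsub : 1 - v ≠ 0 := (sub_pos.2 hv.2).ne'
  have hadd : 1 + v ≠ 0 := (add_pos one_pos hv.1).ne'
  rw [tentSqDensity, abs_of_pos hv.1, show 1 - v ^ 2 = (1 - v) * (1 + v) by ring]
  field_simp [hsub]
  ring

theorem intervalIntegrable_inv_one_add :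
    IntervalIntegrable (fun v : ℝ => (1 + v)⁻¹) volume 0 1 := by
  refine (ContinuousOn.inv₀ (by fun_prop) fun v hv => ?_).intervalIntegrable
  rw [uIcc_of_le zero_le_one] at hv
  linarith [hv.1]

theorem integral_six_mul_inv_one_add_sub_three :
    ∫ v in (0 : ℝ)..1, (6 * (1 + v)⁻¹ - 3) = 3 * (2 * Real.log 2 - 1) := by
  rw [intervalIntegral.integral_sub (intervalIntegrable_inv_one_add.const_mul 6) (by simp),
    intervalIntegral.integral_const_mul,
    intervalIntegral.integral_comp_add_left (fun v : ℝ => v⁻¹),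
    integral_inv_of_pos (by norm_num) (by norm_num), intervalIntegral.integral_const,
    add_zero, div_one, one_add_one_eq_two, sub_zero, one_smul]
  ring

theorem singularThreshold_tentSqDensity :
    singularThreshold tentSqDensity = ENNReal.ofReal (3 * (2 * Real.log 2 - 1)) := by
  have hint : IntegrableOn (fun v : ℝ => 6 * (1 + v)⁻¹ - 3) (Ioo 0 1) :=
    (intervalIntegrable_iff_integrableOn_Ioo_of_le zero_le_one).1
      ((intervalIntegrable_inv_one_add.const_mul 6).sub (by simp))
  have hnonneg : ∀ v ∈ Ioo (0 : ℝ) 1, 0 ≤ 6 * (1 + v)⁻¹ - 3 := by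
    intro v hv
    rw [← two_mul_tentSqDensity_div_one_sub_sq hv]
    exact div_nonneg (mul_nonneg zero_le_two (tentSqDensity_nonneg v))
      (sub_nonneg.2 (pow_le_one₀ hv.1.le hv.2.le))
  calc singularThreshold tentSqDensity
      = ∫⁻ v in Ioo (0 : ℝ) 1, ENNReal.ofReal (6 * (1 + v)⁻¹ - 3) :=
        setLIntegral_congr_fun measurableSet_Ioo fun v hv =>
          congrArg ENNReal.ofReal (two_mul_tentSqDensity_div_one_sub_sq hv)
    _ = ENNReal.ofReal (∫ v in Ioo (0 : ℝ) 1, (6 * (1 + v)⁻¹ - 3)) :=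
        (ofReal_integral_eq_lintegral_ofReal hint
          ((ae_restrict_iff' measurableSet_Ioo).2 (.of_forall hnonneg))).symm
    _ = ENNReal.ofReal (3 * (2 * Real.log 2 - 1)) := by
        rw [← integral_Ioc_eq_integral_Ioo, ← intervalIntegral.integral_of_le zero_le_one,
          integral_six_mul_inv_one_add_sub_three]

theorem singularThreshold_tentSqDensity_le_ofReal_abs_iff (p : ℝ) :
    singularThreshold tentSqDensity ≤ ENNReal.ofReal |p| ↔ 3 * (2 * Real.log 2 - 1) ≤ |p| := by
  rw [singularThreshold_tentSqDensity, ENNReal.ofReal_le_ofReal_iff (abs_nonneg p)]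

theorem singularThreshold_tentSqDensity_pos : 0 < singularThreshold tentSqDensity := by
  rw [singularThreshold_tentSqDensity, ENNReal.ofReal_pos]
  linarith [Real.log_two_gt_d9]

theorem dispersionIntegral_tentSqDensity_le_one_iff {p : ℝ} (hp : p ≠ 0) :
    dispersionIntegral tentSqDensity p ≤ 1 ↔ 3 * (2 * Real.log 2 - 1) ≤ |p| :=
  (dispersionIntegral_le_one_iff_of_even measurable_tentSqDensity even_tentSqDensity
    (fun v _ => tentSqDensity_nonneg v) hp).trans
    (singularThreshold_tentSqDensity_le_ofReal_abs_iff p)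

theorem singularSet_tentSqDensity :
    singularSet tentSqDensity = {p | 3 * (2 * Real.log 2 - 1) ≤ |p|} := by
  rw [singularSet_eq_of_even measurable_tentSqDensity even_tentSqDensity
    (fun v _ => tentSqDensity_nonneg v) singularThreshold_tentSqDensity_pos]
  simp only [singularThreshold_tentSqDensity_le_ofReal_abs_iff]

/-- for `M(v) = (3/2)(1 − |v|)²` on `V = [−1,1]`, `M` is a probability
density and, for `p ≠ 0`, `∫_V M(v)/(|p| − v p) dv ≤ 1` iff `|p| ≥ 3(2 ln 2 − 1)`;
equivalently, `Sing(M) = {p : |p| ≥ 3(2 ln 2 − 1)}`. -/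
theorem stmt6 :
    (∀ v ∈ Set.Icc (-1 : ℝ) 1, 0 ≤ (3 / 2) * (1 - |v|) ^ 2) ∧
    (∫ v in Set.Icc (-1 : ℝ) 1, (3 / 2) * (1 - |v|) ^ 2 = 1) ∧
    (∀ p : ℝ, p ≠ 0 →
      ((∫⁻ v in Set.Icc (-1 : ℝ) 1,
          ENNReal.ofReal ((3 / 2) * (1 - |v|) ^ 2 / (|p| - v * p))) ≤ 1
        ↔ 3 * (2 * Real.log 2 - 1) ≤ |p|)) ∧
    ({p : ℝ | p ≠ 0 ∧
        (∫⁻ v in Set.Icc (-1 : ℝ) 1,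
          ENNReal.ofReal ((3 / 2) * (1 - |v|) ^ 2 / (|p| - v * p))) ≤ 1}
      = {p : ℝ | 3 * (2 * Real.log 2 - 1) ≤ |p|}) := by
  exact ⟨fun v _ => tentSqDensity_nonneg v, integral_tentSqDensity,
    fun _ hp => dispersionIntegral_tentSqDensity_le_one_iff hp, singularSet_tentSqDensity⟩
end
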